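/- In R = ℂ[b,σ₁,ρ,σ₂,τ,σ₃] the following hold: (i) the ideals (ρ,τ) and (σ₃, τ²−ρσ₂) are prime; (ii) (τ²−ρσ₂, τσ₃, ρσ₃) = (ρ,τ) ∩ (σ₃, τ²−ρσ₂); (iii) (ρ,τ) + (σ₃, τ²−ρσ₂) = (ρ,τ,σ₃); (iv) consequently the quotient ring R/(τ²−ρσ₂, τσ₃, ρσ₃) is reduced. -/

import Mathlib

open MvPolynomial

noncomputable section

/-- `R = ℂ[b,σ₁,ρ,σ₂,τ,σ₃]`, with variables `0 = b`, `1 = σ₁`, `2 = ρ`, `3 = σ₂`,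
`4 = τ`, `5 = σ₃`. -/
abbrev R6 : Type := MvPolynomial (Fin 6) ℂ

def ρ : R6 := X 2
def σ₂ : R6 := X 3
def τ : R6 := X 4
def σ₃ : R6 := X 5

/-!
Killing a set of variables is a surjection between polynomial rings that is split by `rename`, so
the preimage of a prime ideal `I` is the prime ideal generated by `I` and the killed variables.
With `I = 0` this gives the primality of `P = (ρ, τ)`, and with `I = (f)`, `f = τ² - ρσ₂`, that of
`(σ₃, f)`; here `f` is prime because it is linear in `ρ` with relatively prime coefficients.
Since `f ∈ P`, the modular law gives `P ∩ (σ₃, f) = P ∩ (σ₃) + (f)`, and `P ∩ (σ₃) = P σ₃` because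
`σ₃` is a nonzerodivisor modulo `P`. An intersection of two primes is radical.
-/

section KillCompl

variable {ι κ R : Type*} {f : ι → κ}

lemma ker_killCompl [CommSemiring R] (hf : Function.Injective f) :
    RingHom.ker (killCompl (R := R) hf) = Ideal.span (X '' (Set.range f)ᶜ) := by
  refine le_antisymm (fun p hp ↦ mem_ideal_span_X_image.mpr fun m hm ↦ ?_) ?_
  · by_contra! hrange
    have hm_range : (m.support : Set κ) ⊆ Set.range f := fun i hi ↦
      not_imp_comm.mp (hrange i) (Finsupp.mem_support_iff.mp hi)
    apply mem_support_iff.mp hm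
    rw [← Finsupp.mapDomain_comapDomain f hf m hm_range, ← coeff_killCompl hf, hp, coeff_zero]
  · rw [Ideal.span_le]
    rintro _ ⟨i, hi, rfl⟩
    simp_all [killCompl]

variable [CommRing R]

lemma comap_killCompl (hf : Function.Injective f) (I : Ideal (MvPolynomial ι R)) :
    I.comap (killCompl hf) = I.map (rename f) ⊔ Ideal.span (X '' (Set.range f)ᶜ) := by
  have hsurj : Function.Surjective (killCompl (R := R) hf) :=
    fun p ↦ ⟨rename f p, killCompl_rename_app hf p⟩
  have hmap : (I.map (rename f)).map (killCompl hf) = I := by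
    rw [Ideal.map_mapₐ, killCompl_comp_rename]
    exact Ideal.map_id I
  calc I.comap (killCompl hf)
      = ((I.map (rename f)).map (killCompl hf)).comap (killCompl hf) := by rw [hmap]
    _ = I.map (rename f) ⊔ RingHom.ker (killCompl hf) := Ideal.comap_map_of_surjective _ hsurj _
    _ = _ := by rw [ker_killCompl]

lemma isPrime_map_rename_sup_span_X (hf : Function.Injective f) (I : Ideal (MvPolynomial ι R))
    [I.IsPrime] : (I.map (rename f) ⊔ Ideal.span (X '' (Set.range f)ᶜ)).IsPrime :=
  comap_killCompl hf I ▸ Ideal.comap_isPrime _ I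

end KillCompl

section VariableIdeals

variable {ι R : Type*}

lemma X_mem_span_X_image_iff [CommSemiring R] [Nontrivial R] {i : ι} {s : Set ι} :
    (X i : MvPolynomial ι R) ∈ Ideal.span (X '' s) ↔ i ∈ s := by
  classical
  simp [mem_ideal_span_X_image, support_X, Finsupp.single_apply]

variable [CommRing R]

lemma isPrime_span_X_image [IsDomain R] (s : Set ι) :
    (Ideal.span (X '' s : Set (MvPolynomial ι R))).IsPrime := by
  have h := isPrime_map_rename_sup_span_X (R := R) (f := ((↑) : ↥sᶜ → ι))
    Subtype.val_injective ⊥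
  rwa [Ideal.map_bot, bot_sup_eq, Subtype.range_coe, compl_compl] at h

lemma isPrime_span_X_rename {i : ι} {p : MvPolynomial {j // j ≠ i} R} (hp : Prime p) :
    (Ideal.span {X i, rename (↑) p}).IsPrime := by
  have : (Ideal.span {p}).IsPrime := (Ideal.span_singleton_prime hp.ne_zero).mpr hp
  have h := isPrime_map_rename_sup_span_X (R := R) (f := ((↑) : {j // j ≠ i} → ι))
    Subtype.val_injective (Ideal.span {p})
  have hcompl : (Set.range ((↑) : {j // j ≠ i} → ι))ᶜ = {i} := by ext; simp
  rwa [hcompl, Set.image_singleton, Ideal.map_span, Set.image_singleton, sup_comm,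
    ← Ideal.span_insert] at h

end VariableIdeals

section Binomial

variable {ι R : Type*} [CommRing R] [IsDomain R] [UniqueFactorizationMonoid R] {r s t : ι}

lemma prime_X_pow_sub_X_mul_X (hrs : r ≠ s) (hrt : r ≠ t) (hst : s ≠ t) (n : ℕ) :
    Prime (X t ^ n - X r * X s : MvPolynomial ι R) := by
  have hrel : IsRelPrime (-X s : MvPolynomial ι R) (X t ^ n) := by
    refine IsRelPrime.neg_left (IsRelPrime.pow_right ?_)
    rw [(X_prime (R := R)).irreducible.isRelPrime_iff_not_dvd]
    simpa [X_dvd_X] using hst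
  have hirr : Irreducible (-X s * X r + X t ^ n : MvPolynomial ι R) :=
    irreducible_mul_X_add _ _ r (by simp) (by simpa [vars_X] using hrs)
      (fun h ↦ hrt (by simpa [vars_X] using vars_pow _ _ h)) hrel
  convert hirr.prime using 1
  ring

lemma isPrime_span_pair_X_X_pow_sub_X_mul_X {u : ι} (hrs : r ≠ s) (hrt : r ≠ t) (hst : s ≠ t)
    (hru : r ≠ u) (hsu : s ≠ u) (htu : t ≠ u) (n : ℕ) :
    (Ideal.span {X u, (X t ^ n - X r * X s : MvPolynomial ι R)}).IsPrime := by
  have hp : Prime (X ⟨t, htu⟩ ^ n - X ⟨r, hru⟩ * X ⟨s, hsu⟩ : MvPolynomial {j // j ≠ u} R) :=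
    prime_X_pow_sub_X_mul_X (by simpa using hrs) (by simpa using hrt) (by simpa using hst) n
  simpa using isPrime_span_X_rename hp

end Binomial

section IdealLattice

variable {A : Type*} {a f : A}

lemma sup_span_pair_of_mem [Semiring A] {I : Ideal A} (hf : f ∈ I) :
    I ⊔ Ideal.span {a, f} = I ⊔ Ideal.span {a} := by
  have hfI : Ideal.span {f} ≤ I := (Ideal.span_singleton_le_iff_mem I).mpr hf
  rw [Ideal.span_insert, ← sup_assoc, sup_eq_left.mpr (hfI.trans le_sup_left)]

lemma inf_span_singleton_eq_mul [CommSemiring A] {P : Ideal A} [P.IsPrime] (ha : a ∉ P) :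
    P ⊓ Ideal.span {a} = P * Ideal.span {a} := by
  refine le_antisymm ?_ Ideal.mul_le_inf
  rintro x ⟨hxP, hxa⟩
  obtain ⟨c, rfl⟩ := Ideal.mem_span_singleton'.mp hxa
  have hc : c ∈ P := (Ideal.IsPrime.mem_or_mem ‹_› hxP).resolve_right ha
  exact Ideal.mul_mem_mul hc (Ideal.mem_span_singleton_self a)

variable [CommRing A]

lemma inf_span_pair_eq_mul_sup {P : Ideal A} [P.IsPrime] (ha : a ∉ P) (hf : f ∈ P) :
    P ⊓ Ideal.span {a, f} = P * Ideal.span {a} ⊔ Ideal.span {f} := by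
  have hfP : Ideal.span {f} ≤ P := (Ideal.span_singleton_le_iff_mem P).mpr hf
  rw [Ideal.span_insert, ← inf_span_singleton_eq_mul ha, inf_sup_assoc_of_le _ hfP]

lemma span_pair_inf_span_pair {x y : A} [(Ideal.span {x, y}).IsPrime]
    (ha : a ∉ Ideal.span {x, y}) (hf : f ∈ Ideal.span {x, y}) :
    Ideal.span {x, y} ⊓ Ideal.span {a, f} = Ideal.span {f, y * a, x * a} := by
  rw [inf_span_pair_eq_mul_sup ha hf, Ideal.span_mul_span', Set.mul_singleton, Set.image_pair,
    sup_comm, Set.pair_comm, ← Ideal.span_insert]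

end IdealLattice

theorem stmt7_general {ι R : Type*} [CommRing R] [IsDomain R] [UniqueFactorizationMonoid R]
    {r s t u : ι} (hrs : r ≠ s) (hrt : r ≠ t) (hst : s ≠ t) (hru : r ≠ u) (hsu : s ≠ u)
    (htu : t ≠ u) {n : ℕ} (hn : n ≠ 0) :
    (Ideal.span {(X r : MvPolynomial ι R), X t}).IsPrime ∧
    (Ideal.span {(X u : MvPolynomial ι R), X t ^ n - X r * X s}).IsPrime ∧
    Ideal.span {(X t ^ n - X r * X s : MvPolynomial ι R), X t * X u, X r * X u} =
      Ideal.span {X r, X t} ⊓ Ideal.span {X u, X t ^ n - X r * X s} ∧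
    Ideal.span {(X r : MvPolynomial ι R), X t} ⊔ Ideal.span {X u, X t ^ n - X r * X s} =
      Ideal.span {X r, X t, X u} ∧
    IsReduced (MvPolynomial ι R ⧸
      Ideal.span {(X t ^ n - X r * X s : MvPolynomial ι R), X t * X u, X r * X u}) := by
  have hP : (Ideal.span {(X r : MvPolynomial ι R), X t}).IsPrime := by
    simpa only [Set.image_pair] using isPrime_span_X_image (R := R) {r, t}
  have hQ := isPrime_span_pair_X_X_pow_sub_X_mul_X (R := R) hrs hrt hst hru hsu htu n
  have hu : (X u : MvPolynomial ι R) ∉ Ideal.span {X r, X t} := by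
    rw [← Set.image_pair, X_mem_span_X_image_iff]
    simp [hru.symm, htu.symm]
  have hf : (X t ^ n - X r * X s : MvPolynomial ι R) ∈ Ideal.span {X r, X t} :=
    sub_mem (Ideal.pow_mem_of_mem _ (Ideal.subset_span (by simp)) n hn.pos)
      (Ideal.mul_mem_right _ _ (Ideal.subset_span (by simp)))
  have hinf : Ideal.span {(X t ^ n - X r * X s : MvPolynomial ι R), X t * X u, X r * X u} =
      Ideal.span {X r, X t} ⊓ Ideal.span {X u, X t ^ n - X r * X s} :=
    (span_pair_inf_span_pair hu hf).symm
  refine ⟨hP, hQ, hinf, ?_, ?_⟩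
  · rw [sup_span_pair_of_mem hf, ← Ideal.span_union, Set.insert_union, Set.singleton_union]
  · rw [← Ideal.isRadical_iff_quotient_reduced, hinf]
    exact hP.isRadical.inf hQ.isRadical

/-- In `R = ℂ[b,σ₁,ρ,σ₂,τ,σ₃]`:
(i) the ideals `(ρ,τ)` and `(σ₃, τ²−ρσ₂)` are prime;
(ii) `(τ²−ρσ₂, τσ₃, ρσ₃) = (ρ,τ) ∩ (σ₃, τ²−ρσ₂)`;
(iii) `(ρ,τ) + (σ₃, τ²−ρσ₂) = (ρ,τ,σ₃)`;
(iv) consequently `R/(τ²−ρσ₂, τσ₃, ρσ₃)` is reduced. -/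
theorem stmt7 :
    (Ideal.span {ρ, τ}).IsPrime ∧
    (Ideal.span {σ₃, τ ^ 2 - ρ * σ₂}).IsPrime ∧
    Ideal.span {τ ^ 2 - ρ * σ₂, τ * σ₃, ρ * σ₃} =
      Ideal.span {ρ, τ} ⊓ Ideal.span {σ₃, τ ^ 2 - ρ * σ₂} ∧
    Ideal.span {ρ, τ} ⊔ Ideal.span {σ₃, τ ^ 2 - ρ * σ₂} = Ideal.span {ρ, τ, σ₃} ∧
    IsReduced (R6 ⧸ Ideal.span {τ ^ 2 - ρ * σ₂, τ * σ₃, ρ * σ₃}) :=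
  stmt7_general (ι := Fin 6) (R := ℂ) (r := 2) (s := 3) (t := 4) (u := 5)
    (by decide) (by decide) (by decide) (by decide) (by decide) (by decide) two_ne_zero

end
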